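/- arXiv:1701.04977 — 5 statements merged into one kernel-verified Lean document; each statement's English description precedes it below -/
import Mathlib

section
/- There exists a constant c > 0, depending only on 𝔞, the basis α_1, …, α_r, and ‖·‖, such that for every ε > 0 and every H ∈ ā⁺ there exists H_ε ∈ ā⁺_ε with H − H_ε ∈ ā⁺ and ‖H_ε‖ ≥ (1 − cε)‖H‖. -/
/-- `V` (playing the role of `𝔞`) is a finite-dimensional real normed vector space of
dimension `r ≥ 1`, and `α` is a basis of its dual space.  The closed cone
`ā⁺ = {H | ∀ j, 0 ≤ α j H}`, and `ā⁺_ε = {H ∈ ā⁺ | ∀ j, α j H > 0 → α j H ≥ ε‖H‖}`.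
There is a constant `c > 0` (depending only on the data fixed here) such that for every
`ε > 0` and every `H ∈ ā⁺` there is `Hε ∈ ā⁺_ε` with `H - Hε ∈ ā⁺` and
`‖Hε‖ ≥ (1 - c·ε)‖H‖`. -/
theorem stmt_0 {V : Type*} [NormedAddCommGroup V] [NormedSpace ℝ V] [FiniteDimensional ℝ V]
    {r : ℕ} (hr : 1 ≤ r) (hrank : Module.finrank ℝ V = r)
    (α : Module.Basis (Fin r) ℝ (Module.Dual ℝ V)) :
    ∃ c : ℝ, 0 < c ∧ ∀ ε : ℝ, 0 < ε → ∀ H : V, (∀ j : Fin r, 0 ≤ α j H) →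
      ∃ Hε : V,
        (∀ j : Fin r, 0 ≤ α j Hε) ∧
        (∀ j : Fin r, 0 < α j Hε → ε * ‖Hε‖ ≤ α j Hε) ∧
        (∀ j : Fin r, 0 ≤ α j (H - Hε)) ∧
        (1 - c * ε) * ‖H‖ ≤ ‖Hε‖ := by
  classical
  have sep : ∀ x y : V, (∀ i, α i x = α i y) → x = y := by
    intro x y h
    apply (Module.evalEquiv ℝ V).injective
    apply α.ext
    intro i
    simpa using h i
  obtain ⟨e, he⟩ : ∃ e : Fin r → V, ∀ i j, α i (e j) = if i = j then 1 else 0 := by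
    refine ⟨fun j => (Module.evalEquiv ℝ V).symm (α.dualBasis j), fun i j => ?_⟩
    have h1 : Module.evalEquiv ℝ V ((Module.evalEquiv ℝ V).symm (α.dualBasis j)) (α i)
        = α.dualBasis j (α i) := by rw [LinearEquiv.apply_symm_apply]
    rw [Module.Basis.dualBasis_apply_self] at h1
    simpa using h1
  have hα : ∀ (f : Fin r → ℝ) i, α i (∑ j, f j • e j) = f i := by
    intro f i
    simp [he]
  set S : ℝ := ∑ j, ‖e j‖ with hS
  have hS0 : 0 ≤ S := Finset.sum_nonneg fun j _ => norm_nonneg _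
  refine ⟨2 * S + 1, by linarith, fun ε hε H hH => ?_⟩
  by_cases hc : 1 ≤ (2 * S + 1) * ε
  · refine ⟨0, by simp, by simp, by simpa using hH, ?_⟩
    rw [norm_zero]
    exact mul_nonpos_of_nonpos_of_nonneg (by linarith) (norm_nonneg _)
  push Not at hc
  have hN := norm_nonneg H
  set f : Fin r → ℝ := fun j => if α j H < 2 * ε * ‖H‖ then 0 else α j H with hf
  set g : Fin r → ℝ := fun j => if α j H < 2 * ε * ‖H‖ then α j H else 0 with hg
  have hfg : H = (∑ j, f j • e j) + ∑ j, g j • e j := by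
    apply sep
    intro i
    rw [map_add, hα, hα]
    simp only [hf, hg]
    split_ifs <;> simp
  have hgb : ‖∑ j, g j • e j‖ ≤ 2 * ε * ‖H‖ * S := by
    rw [hS, Finset.mul_sum]
    refine norm_sum_le_of_le _ fun j _ => ?_
    rw [norm_smul]
    refine mul_le_mul_of_nonneg_right ?_ (norm_nonneg _)
    rw [Real.norm_eq_abs]
    simp only [hg]
    split_ifs with h
    · rw [abs_of_nonneg (hH j)]
      exact h.le
    · rw [abs_zero]; positivity
  have hsub : H - (∑ j, f j • e j) = ∑ j, g j • e j := sub_eq_of_eq_add' hfg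
  have h1 : ‖∑ j, f j • e j‖ ≤ ‖H‖ + ‖∑ j, g j • e j‖ := by
    rw [← hsub]
    have := norm_sub_le H (H - ∑ j, f j • e j)
    rwa [sub_sub_cancel] at this
  have h2 : ‖H‖ ≤ ‖∑ j, f j • e j‖ + ‖∑ j, g j • e j‖ := by
    conv_lhs => rw [hfg]
    exact norm_add_le _ _
  have h3 : 2 * ε * ‖H‖ * S ≤ ‖H‖ := by nlinarith
  refine ⟨∑ j, f j • e j, fun j => ?_, fun j => ?_, fun j => ?_, ?_⟩
  · rw [hα]
    simp only [hf]
    split_ifs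
    · exact le_rfl
    · exact hH j
  · rw [hα]
    simp only [hf]
    split_ifs with h
    · intro h0
      exact absurd h0 (lt_irrefl _)
    · intro _
      have h4 : ‖∑ j, f j • e j‖ ≤ 2 * ‖H‖ := by linarith
      have h5 := mul_le_mul_of_nonneg_left h4 hε.le
      simp only [hf] at h5
      linarith
  · rw [hsub, hα]
    simp only [hg]
    split_ifs
    · exact hH j
    · exact le_rfl
  · have := mul_nonneg hε.le hN
    linarith
end

section
/- For every g ∈ G and every measurable Γ-invariant f : G → ℂ with ∫_F |f|² dμ < ∞, the set Γ ∩ gBBg⁻¹ is finite and ∫_B |f(gh)|² dμ(h) ≤ #(Γ ∩ gBBg⁻¹) · ∫_F |f|² dμ. -/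
open MeasureTheory ENNReal NNReal Pointwise

/-- `G` is a locally compact Hausdorff topological group with left Haar measure `μ`,
`Γ` is a countable discrete subgroup, `F` is a measurable fundamental domain for the
left-translation action of `Γ` on `G`, and `B` is a compact symmetric subset.
For every `g ∈ G` and every measurable `Γ`-invariant `f : G → ℂ` with
`∫_F |f|² dμ < ∞`, the set `Γ ∩ gBBg⁻¹` is finite and
`∫_B |f(gh)|² dμ(h) ≤ #(Γ ∩ gBBg⁻¹) · ∫_F |f|² dμ`. -/
theorem stmt_1 {G : Type*} [Group G] [TopologicalSpace G] [IsTopologicalGroup G]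
    [T2Space G] [LocallyCompactSpace G] [MeasurableSpace G] [BorelSpace G]
    (μ : Measure G) [μ.IsHaarMeasure]
    (Γ : Subgroup G) [Countable Γ] [DiscreteTopology Γ]
    (F : Set G) (hF : IsFundamentalDomain Γ F μ)
    (B : Set G) (hBc : IsCompact B) (hBsymm : B = B⁻¹)
    (g : G) (f : G → ℂ) (hf : Measurable f)
    (hinv : ∀ γ ∈ Γ, ∀ x : G, f (γ * x) = f x)
    (hL2 : (∫⁻ x in F, (‖f x‖₊ : ℝ≥0∞) ^ 2 ∂μ) < ⊤) :
    ((Γ : Set G) ∩ ((fun b => g * b * g⁻¹) '' (B * B))).Finite ∧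
      (∫⁻ h in B, (‖f (g * h)‖₊ : ℝ≥0∞) ^ 2 ∂μ) ≤
        (((Γ : Set G) ∩ ((fun b => g * b * g⁻¹) '' (B * B))).ncard : ℝ≥0∞) *
          ∫⁻ x in F, (‖f x‖₊ : ℝ≥0∞) ^ 2 ∂μ := by
  set S : Set G := (Γ : Set G) ∩ ((fun b => g * b * g⁻¹) '' (B * B)) with hS
  have hfin : S.Finite := by
    have hK : IsCompact ((fun b => g * b * g⁻¹) '' (B * B)) :=
      (hBc.mul hBc).image (by fun_prop)
    have hcl : IsClosed (Γ : Set G) := Subgroup.isClosed_of_discrete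
    have hc : IsCompact S := hK.inter_left hcl
    have hd : IsDiscrete (Γ : Set G) := ⟨inferInstanceAs (DiscreteTopology Γ)⟩
    exact hc.finite (hd.mono Set.inter_subset_left)
  refine ⟨hfin, ?_⟩
  set φ : G → ℝ≥0∞ := fun x => (‖f x‖₊ : ℝ≥0∞) ^ 2 with hφ
  have hφm : Measurable φ := by fun_prop
  have hBm : MeasurableSet B := hBc.measurableSet
  set A : Set G := (fun x => g⁻¹ * x) ⁻¹' B with hA
  have hAm : MeasurableSet A := (measurable_const_mul g⁻¹) hBm
  have h1 : (∫⁻ h in B, φ (g * h) ∂μ) = ∫⁻ x, A.indicator φ x ∂μ := by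
    rw [← lintegral_indicator hBm, ← lintegral_mul_left_eq_self (A.indicator φ) g]
    congr 1
    ext h
    have hm : g * h ∈ A ↔ h ∈ B := by
      change g⁻¹ * (g * h) ∈ B ↔ h ∈ B
      rw [inv_mul_cancel_left]
    by_cases hh : h ∈ B
    · rw [Set.indicator_of_mem hh, Set.indicator_of_mem (hm.2 hh)]
    · rw [Set.indicator_of_notMem hh, Set.indicator_of_notMem (fun hc => hh (hm.1 hc))]
  have h2 : (∫⁻ x, A.indicator φ x ∂μ) =
      ∑' γ : Γ, ∫⁻ x in F, A.indicator φ (γ⁻¹ • x) ∂μ := hF.lintegral_eq_tsum' _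
  have h3 : (∑' γ : Γ, ∫⁻ x in F, A.indicator φ (γ⁻¹ • x) ∂μ) =
      ∫⁻ x in F, ∑' γ : Γ, A.indicator φ (γ⁻¹ • x) ∂μ := by
    rw [lintegral_tsum]
    intro γ
    exact ((hφm.indicator hAm).comp (measurable_const_smul γ⁻¹)).aemeasurable
  have h4 : ∀ x, (∑' γ : Γ, A.indicator φ (γ⁻¹ • x)) ≤ (S.ncard : ℝ≥0∞) * φ x := by
    intro x
    set T : Set Γ := {γ | γ⁻¹ • x ∈ A} with hT
    have e : ∀ γ : Γ, A.indicator φ (γ⁻¹ • x) = T.indicator (fun _ => φ x) γ := by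
      intro γ
      have : φ (γ⁻¹ • x) = φ x := by
        simp only [hφ, Subgroup.smul_def, smul_eq_mul]
        rw [hinv _ (γ⁻¹).2]
      by_cases hh : γ⁻¹ • x ∈ A
      · rw [Set.indicator_of_mem hh, Set.indicator_of_mem (show γ ∈ T from hh), this]
      · rw [Set.indicator_of_notMem hh, Set.indicator_of_notMem (show γ ∉ T from hh)]
    simp_rw [e]
    rw [← tsum_subtype, ENNReal.tsum_const]
    gcongr
    have hcard : T.encard ≤ S.encard := by
      rcases T.eq_empty_or_nonempty with h | ⟨γ₀, h₀⟩
      · simp [h]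
      · refine Set.encard_le_encard_of_injOn (f := fun γ : Γ => ((γ⁻¹ * γ₀ : Γ) : G)) ?_ ?_
        · intro γ hγ
          refine ⟨(γ⁻¹ * γ₀).2, ?_⟩
          refine ⟨(g⁻¹ * (γ⁻¹ • x)) * (g⁻¹ * (γ₀⁻¹ • x))⁻¹, Set.mul_mem_mul hγ ?_, ?_⟩
          · rw [hBsymm]
            exact Set.inv_mem_inv.2 h₀
          · simp [Subgroup.smul_def, mul_assoc]
        · intro a _ b _ hab
          simpa using hab
    rw [← hfin.cast_ncard_eq] at hcard
    have := ENat.toENNReal_le.2 hcard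
    rw [ENat.toENNReal_coe] at this
    exact this
  calc (∫⁻ h in B, φ (g * h) ∂μ) = ∫⁻ x in F, ∑' γ : Γ, A.indicator φ (γ⁻¹ • x) ∂μ := by
        rw [h1, h2, h3]
    _ ≤ ∫⁻ x in F, (S.ncard : ℝ≥0∞) * φ x ∂μ := lintegral_mono h4
    _ = (S.ncard : ℝ≥0∞) * ∫⁻ x in F, φ x ∂μ := lintegral_const_mul _ hφm
end

section
/- For every compact subset C ⊆ G there exists a constant κ > 0, depending only on G, Γ, B and C, such that w_B(xg) ≤ κ·w_B(x) for all x ∈ G and all g ∈ C. -/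
open MeasureTheory ENNReal NNReal Pointwise

/-- The quantity `w_B(x)`: the supremum, over all measurable `Γ`-invariant `f : G → ℂ`
with `∫_F |f|² dμ ≤ 1`, of `(∫_B |f(xh)|² dμ(h))^{1/2}`. -/
noncomputable def wB {G : Type*} [Group G] [MeasurableSpace G]
    (Γ : Subgroup G) (F : Set G) (μ : Measure G) (B : Set G) (x : G) : ℝ≥0∞ :=
  ⨆ f : {f : G → ℂ // Measurable f ∧ (∀ γ ∈ Γ, ∀ z : G, f (γ * z) = f z) ∧
      (∫⁻ z in F, (‖f z‖₊ : ℝ≥0∞) ^ 2 ∂μ) ≤ 1},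
    (∫⁻ h in B, (‖f.1 (x * h)‖₊ : ℝ≥0∞) ^ 2 ∂μ) ^ (1 / 2 : ℝ)

/-- `G` is a locally compact Hausdorff unimodular topological group with Haar measure `μ`,
`Γ` a countable discrete subgroup, `F` a measurable fundamental domain for the
left-translation action of `Γ`, and `B` a compact symmetric neighborhood of the identity.
For every compact `C ⊆ G` there is `κ > 0` (depending only on `G, Γ, B, C`) with
`w_B(xg) ≤ κ·w_B(x)` for all `x ∈ G`, `g ∈ C`. -/
theorem stmt_2 {G : Type*} [Group G] [TopologicalSpace G] [IsTopologicalGroup G]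
    [T2Space G] [LocallyCompactSpace G] [MeasurableSpace G] [BorelSpace G]
    (μ : Measure G) [μ.IsHaarMeasure] [μ.IsMulRightInvariant]
    (Γ : Subgroup G) [Countable Γ] [DiscreteTopology Γ]
    (F : Set G) (hF : IsFundamentalDomain Γ F μ)
    (B : Set G) (hBc : IsCompact B) (hBsymm : B = B⁻¹) (hBnhds : B ∈ nhds (1 : G))
    (C : Set G) (hC : IsCompact C) :
    ∃ κ : ℝ≥0, 0 < κ ∧ ∀ x : G, ∀ g ∈ C, wB Γ F μ B (x * g) ≤ κ * wB Γ F μ B x := by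
  have hBm : MeasurableSet B := hBc.measurableSet
  obtain ⟨t, -, ht⟩ := (hC.mul hBc).elim_nhds_subcover (fun k => (fun z => z * k⁻¹) ⁻¹' B) (by
    intro k _
    have hc : Continuous (fun z : G => z * k⁻¹) := by fun_prop
    apply hc.continuousAt.preimage_mem_nhds
    simpa using hBnhds)
  -- right translates of the fundamental domain give the same integrals
  have key : ∀ (f : G → ℂ), (∀ γ ∈ Γ, ∀ z : G, f (γ * z) = f z) →
      ∀ k : G, ∫⁻ z in F, (‖f (z * k)‖₊ : ℝ≥0∞) ^ 2 ∂μ = ∫⁻ z in F, (‖f z‖₊ : ℝ≥0∞) ^ 2 ∂μ := by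
    intro f hinv k
    have hF2 : IsFundamentalDomain Γ (MulOpposite.op k • F) μ := hF.smul_of_comm _
    have hmp : MeasurePreserving (fun z : G => z * k) μ μ := measurePreserving_mul_right μ k
    have hemb : MeasurableEmbedding (fun z : G => z * k) :=
      (Homeomorph.mulRight k).measurableEmbedding
    rw [← hF2.setLIntegral_eq hF (fun z => (‖f z‖₊ : ℝ≥0∞) ^ 2)
      (fun γ z => by
        change (‖f ((γ : G) * z)‖₊ : ℝ≥0∞) ^ 2 = _
        rw [hinv γ γ.2 z])]
    exact hmp.setLIntegral_comp_emb hemb (fun z => (‖f z‖₊ : ℝ≥0∞) ^ 2) F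
  refine ⟨(t.card : ℝ≥0) + 1, add_pos_of_nonneg_of_pos (Nat.cast_nonneg _) one_pos, fun x g hg => ?_⟩
  set W := wB Γ F μ B x with hW
  refine iSup_le ?_
  rintro ⟨f, hfm, hinv, hf1⟩
  have hpiece : ∀ k : G, ∫⁻ h in B, (‖f (x * (h * k))‖₊ : ℝ≥0∞) ^ 2 ∂μ ≤ W ^ 2 := by
    intro k
    have hmk : Measurable (fun z : G => z * k) := (by fun_prop : Continuous _).measurable
    have h1 := le_iSup (fun f : {f : G → ℂ // Measurable f ∧ (∀ γ ∈ Γ, ∀ z : G, f (γ * z) = f z) ∧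
      (∫⁻ z in F, (‖f z‖₊ : ℝ≥0∞) ^ 2 ∂μ) ≤ 1} =>
        (∫⁻ h in B, (‖f.1 (x * h)‖₊ : ℝ≥0∞) ^ 2 ∂μ) ^ (1 / 2 : ℝ))
      ⟨fun z => f (z * k), hfm.comp hmk, fun γ hγ z => by simp only [mul_assoc, hinv γ hγ],
        (key f hinv k).le.trans hf1⟩
    change _ ≤ W at h1
    rw [one_div, ENNReal.rpow_inv_le_iff (by norm_num)] at h1
    simpa [mul_assoc] using h1
  simp only
  rw [one_div, ENNReal.rpow_inv_le_iff (by norm_num)]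
  have e1 : ∫⁻ h in B, (‖f (x * g * h)‖₊ : ℝ≥0∞) ^ 2 ∂μ
      = ∫⁻ h in (fun h => g * h) '' B, (‖f (x * h)‖₊ : ℝ≥0∞) ^ 2 ∂μ := by
    rw [← (measurePreserving_mul_left μ g).setLIntegral_comp_emb
      (Homeomorph.mulLeft g).measurableEmbedding (fun h => (‖f (x * h)‖₊ : ℝ≥0∞) ^ 2) B]
    simp only [mul_assoc]
  have e2 : ∀ k : G, ∫⁻ h in (fun z => z * k⁻¹) ⁻¹' B, (‖f (x * h)‖₊ : ℝ≥0∞) ^ 2 ∂μ ≤ W ^ 2 := by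
    intro k
    refine le_trans (le_of_eq ?_) (hpiece k)
    rw [← (measurePreserving_mul_right μ k⁻¹).setLIntegral_comp_preimage_emb
      (Homeomorph.mulRight k⁻¹).measurableEmbedding (fun h => (‖f (x * (h * k))‖₊ : ℝ≥0∞) ^ 2) B]
    simp
  have hsub : (fun h => g * h) '' B ⊆ ⋃ k ∈ t, (fun z => z * k⁻¹) ⁻¹' B := by
    refine Set.Subset.trans ?_ ht
    rintro _ ⟨b, hb, rfl⟩
    exact Set.mul_mem_mul hg hb
  calc ∫⁻ h in B, (‖f (x * g * h)‖₊ : ℝ≥0∞) ^ 2 ∂μ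
      ≤ ∫⁻ h in ⋃ k ∈ t, (fun z => z * k⁻¹) ⁻¹' B, (‖f (x * h)‖₊ : ℝ≥0∞) ^ 2 ∂μ := by
        rw [e1]; exact lintegral_mono_set hsub
    _ ≤ ∑ k ∈ t, ∫⁻ h in (fun z => z * k⁻¹) ⁻¹' B, (‖f (x * h)‖₊ : ℝ≥0∞) ^ 2 ∂μ := by
        have h := lintegral_iUnion_le (μ := μ) (fun k : t => (fun z : G => z * (k : G)⁻¹) ⁻¹' B)
          (fun h => (‖f (x * h)‖₊ : ℝ≥0∞) ^ 2)
        rw [tsum_fintype, Finset.sum_coe_sort t (fun k =>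
          ∫⁻ h in (fun z => z * k⁻¹) ⁻¹' B, (‖f (x * h)‖₊ : ℝ≥0∞) ^ 2 ∂μ)] at h
        refine le_trans (lintegral_mono_set ?_) h
        intro z hz
        simpa using hz
    _ ≤ ∑ k ∈ t, W ^ 2 := Finset.sum_le_sum fun k _ => e2 k
    _ = (t.card : ℝ≥0∞) * W ^ 2 := by simp
    _ ≤ ((t.card : ℝ≥0∞) + 1) ^ 2 * W ^ 2 := by
        gcongr
        norm_cast
        nlinarith
    _ = _ := by
        push_cast
        rw [← mul_pow]
        norm_num
end

section
/- For every i = 1, …, m and every t ≤ 0, the Bochner integral ∫_{−∞}^{t} e^{(λ_{i−1}−λ_i)s} ψ_{i−1}(s) ds converges absolutely, ψ_i(t) = ∫_{−∞}^{t} e^{(λ_{i−1}−λ_i)s} ψ_{i−1}(s) ds, and ‖ψ_i(t)‖ ≤ C e^{(γ − Re λ_i)t} / ∏_{j=1}^{i} (γ − Re λ_j). -/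
open MeasureTheory Filter

theorem step_aux {E : Type*} [NormedAddCommGroup E] [NormedSpace ℂ E] [CompleteSpace E]
    (a b : ℂ) (γ K : ℝ) (hb : b.re < γ) (f g : ℝ → E) (hf : Continuous f)
    (hfb : ∀ t : ℝ, t ≤ 0 → ‖f t‖ ≤ K * Real.exp ((γ - a.re) * t))
    (hg : ∀ t : ℝ, HasDerivAt g (Complex.exp ((a - b) * t) • f t) t)
    (hlim : Tendsto g atBot (nhds (0 : E))) (t : ℝ) (ht : t ≤ 0) :
    IntegrableOn (fun s : ℝ => Complex.exp ((a - b) * s) • f s) (Set.Iic t) ∧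
      (g t = ∫ s in Set.Iic t, Complex.exp ((a - b) * s) • f s) ∧
      ‖g t‖ ≤ K / (γ - b.re) * Real.exp ((γ - b.re) * t) := by
  have hpos : 0 < γ - b.re := by linarith
  have hdom : IntegrableOn (fun s : ℝ => K * Real.exp ((γ - b.re) * s)) (Set.Iic t) :=
    (integrableOn_exp_mul_Iic hpos t).const_mul K
  have hbd : ∀ s : ℝ, s ∈ Set.Iic t → ‖Complex.exp ((a - b) * s) • f s‖
      ≤ K * Real.exp ((γ - b.re) * s) := by
    intro s hs
    have h1 := hfb s (le_trans hs ht)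
    have h2 : ‖Complex.exp ((a - b) * s)‖ = Real.exp ((a.re - b.re) * s) := by
      simp [Complex.norm_exp]
    rw [norm_smul, h2]
    calc _ ≤ Real.exp ((a.re - b.re) * s) * (K * Real.exp ((γ - a.re) * s)) := by gcongr
      _ = K * (Real.exp ((a.re - b.re) * s) * Real.exp ((γ - a.re) * s)) := by ring
      _ = _ := by rw [← Real.exp_add]; ring_nf
  have hae : ∀ᵐ s : ℝ ∂(volume.restrict (Set.Iic t)), ‖Complex.exp ((a - b) * s) • f s‖
      ≤ K * Real.exp ((γ - b.re) * s) :=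
    (ae_restrict_iff' measurableSet_Iic).2 (Eventually.of_forall hbd)
  have hint : IntegrableOn (fun s : ℝ => Complex.exp ((a - b) * s) • f s) (Set.Iic t) := by
    refine Integrable.mono' hdom ?_ hae
    exact Continuous.aestronglyMeasurable (by fun_prop)
  have heq : g t = ∫ s in Set.Iic t, Complex.exp ((a - b) * s) • f s := by
    rw [integral_Iic_of_hasDerivAt_of_tendsto' (fun x _ => hg x) hint hlim, sub_zero]
  refine ⟨hint, heq, ?_⟩
  rw [heq]
  refine (norm_integral_le_of_norm_le hdom hae).trans (le_of_eq ?_)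
  rw [integral_const_mul, integral_exp_mul_Iic hpos]
  ring

/-- `E` is a complex Banach space, `m ≥ 1`, `C ≥ 0`, `λ_0 = 0`, `λ_1, …, λ_m ∈ ℂ` with
`Re λ_i < γ` for `1 ≤ i ≤ m`; `ψ_0` is continuous with `‖ψ_0(t)‖ ≤ C e^{γt}` for `t ≤ 0`,
and for `1 ≤ i ≤ m`, `ψ_i` is differentiable with `ψ_i'(t) = e^{(λ_{i−1}−λ_i)t} ψ_{i−1}(t)`
and `ψ_i(t) → 0` as `t → −∞`.  Then for every `1 ≤ i ≤ m` and `t ≤ 0` the Bochner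
integral `∫_{−∞}^t e^{(λ_{i−1}−λ_i)s} ψ_{i−1}(s) ds` converges absolutely,
`ψ_i(t)` equals it, and `‖ψ_i(t)‖ ≤ C e^{(γ−Re λ_i)t} / ∏_{j=1}^i (γ − Re λ_j)`. -/
theorem stmt_4 {E : Type*} [NormedAddCommGroup E] [NormedSpace ℂ E] [CompleteSpace E]
    (m : ℕ) (hm : 1 ≤ m) (C γ : ℝ) (hC : 0 ≤ C)
    (lam : ℕ → ℂ) (hlam0 : lam 0 = 0)
    (hγ : ∀ i : ℕ, 1 ≤ i → i ≤ m → (lam i).re < γ)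
    (ψ : ℕ → ℝ → E) (hψ0c : Continuous (ψ 0))
    (hψ0 : ∀ t : ℝ, t ≤ 0 → ‖ψ 0 t‖ ≤ C * Real.exp (γ * t))
    (hderiv : ∀ i : ℕ, 1 ≤ i → i ≤ m → ∀ t : ℝ,
      HasDerivAt (ψ i) (Complex.exp ((lam (i - 1) - lam i) * t) • ψ (i - 1) t) t)
    (hlim : ∀ i : ℕ, 1 ≤ i → i ≤ m → Tendsto (ψ i) atBot (nhds (0 : E))) :
    ∀ i : ℕ, 1 ≤ i → i ≤ m → ∀ t : ℝ, t ≤ 0 →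
      IntegrableOn (fun s : ℝ => Complex.exp ((lam (i - 1) - lam i) * s) • ψ (i - 1) s)
        (Set.Iic t) ∧
      (ψ i t = ∫ s in Set.Iic t, Complex.exp ((lam (i - 1) - lam i) * s) • ψ (i - 1) s) ∧
      ‖ψ i t‖ ≤ C * Real.exp ((γ - (lam i).re) * t) /
        ∏ j ∈ Finset.Icc 1 i, (γ - (lam j).re) := by
  have key : ∀ k : ℕ, k ≤ m → Continuous (ψ k) ∧ ∀ t : ℝ, t ≤ 0 →
      ‖ψ k t‖ ≤ (C / ∏ j ∈ Finset.Icc 1 k, (γ - (lam j).re)) *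
        Real.exp ((γ - (lam k).re) * t) := by
    intro k
    induction k with
    | zero => exact fun _ => ⟨hψ0c, by simpa [hlam0] using hψ0⟩
    | succ k ih =>
      intro hk
      obtain ⟨hc, hb⟩ := ih (by omega)
      have hd := hderiv (k + 1) (by omega) hk
      refine ⟨continuous_iff_continuousAt.2 fun t => (hd t).continuousAt, fun t ht => ?_⟩
      have h := (step_aux (lam k) (lam (k + 1)) γ _ (hγ _ (by omega) hk) (ψ k) (ψ (k + 1))
        hc hb hd (hlim _ (by omega) hk) t ht).2.2
      rwa [Finset.prod_Icc_succ_top (by omega), ← div_div]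
  intro i hi him t ht
  obtain ⟨hc, hb⟩ := key (i - 1) (by omega)
  obtain ⟨h1, h2, -⟩ := step_aux (lam (i - 1)) (lam i) γ _ (hγ i hi him) (ψ (i - 1)) (ψ i)
    hc hb (hderiv i hi him) (hlim i hi him) t ht
  refine ⟨h1, h2, ((key i him).2 t ht).trans (le_of_eq ?_)⟩
  ring
end

section
/- There exists an open neighborhood B₀ of the identity in G such that Γ ∩ (N·B₀) = Γ ∩ N. -/
open Pointwise

/-- `G` is a locally compact Hausdorff topological group, `Γ` a discrete subgroup, and `N` a
closed subgroup such that `Γ ∩ N` is cocompact in `N` (there is a compact `F ⊆ N` with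
`N = (Γ ∩ N)·F`).  Then there is an open neighborhood `B₀` of the identity with
`Γ ∩ (N·B₀) = Γ ∩ N`. -/
theorem stmt_9 {G : Type*} [Group G] [TopologicalSpace G] [IsTopologicalGroup G]
    [T2Space G] [LocallyCompactSpace G]
    (Γ : Subgroup G) [DiscreteTopology Γ]
    (N : Subgroup G) (hNclosed : IsClosed (N : Set G))
    (hcocompact : ∃ F : Set G, IsCompact F ∧ F ⊆ (N : Set G) ∧
      (N : Set G) = ((Γ : Set G) ∩ (N : Set G)) * F) :
    ∃ B₀ : Set G, IsOpen B₀ ∧ (1 : G) ∈ B₀ ∧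
      (Γ : Set G) ∩ ((N : Set G) * B₀) = (Γ : Set G) ∩ (N : Set G) := by
  obtain ⟨F, hFc, hFN, hN⟩ := hcocompact
  have hΓ : IsClosed (Γ : Set G) := Subgroup.isClosed_of_discrete
  have hcl : IsClosed ((Γ : Set G) \ (N : Set G)) := by
    have h := hΓ.isClosedEmbedding_subtypeVal.isClosedMap
      {x | (x : G) ∉ N} (isClosed_discrete _)
    convert h using 1
    ext x
    constructor
    · rintro ⟨h1, h2⟩
      exact ⟨⟨x, h1⟩, h2, rfl⟩
    · rintro ⟨y, h1, rfl⟩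
      exact ⟨y.2, h1⟩
  obtain ⟨V, hV, hFV⟩ := compact_open_separated_mul_right hFc hcl.isOpen_compl
    (fun x hx h => h.2 (hFN hx))
  obtain ⟨B, hBV, hBo, hB1⟩ := mem_nhds_iff.1 hV
  refine ⟨B, hBo, hB1, ?_⟩
  ext x
  constructor
  · rintro ⟨hx, n, hn, b, hb, rfl⟩
    refine ⟨hx, ?_⟩
    rw [hN] at hn
    obtain ⟨d, ⟨hdΓ, hdN⟩, f, hf, rfl⟩ := hn
    have h1 : f * b ∈ ((Γ : Set G) \ (N : Set G))ᶜ := hFV (Set.mul_mem_mul hf (hBV hb))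
    have h2 : f * b ∈ Γ := by
      have := Γ.mul_mem (Γ.inv_mem hdΓ) hx
      simpa [mul_assoc] using this
    have h3 : f * b ∈ N := by
      by_contra h
      exact h1 ⟨h2, h⟩
    have := N.mul_mem hdN h3
    simpa [mul_assoc] using this
  · rintro ⟨hx, hn⟩
    exact ⟨hx, x, hn, 1, hB1, mul_one x⟩
end
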